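/- Let (g,ω,J) be a finite-dimensional real pseudo-Kähler Lie-Yamaguti algebra. Then (g_ℂ, ω_ℂ, E) is a complex para-Kähler Lie-Yamaguti algebra, where g_ℂ = g ⊗_ℝ ℂ is the complexification of g with the complex-trilinear/bilinear extensions of the brackets, E := −iJ_ℂ with J_ℂ(x+iy) := Jx+iJy, and ω_ℂ is the complex-bilinear extension of ω: ω_ℂ(x₁+iy₁, x₂+iy₂) = ω(x₁,x₂)−ω(y₁,y₂)+iω(x₁,y₂)+iω(y₁,x₂). -/

import Mathlib

/-! The conditions defining Lie-Yamaguti algebras and symplectic structures are multilinear. The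
complexified brackets and form are `ℂ`-multilinear, so each condition on `g_ℂ` splits, at
`x₁ + i x₂, y₁ + i y₂, …`, into a real and an imaginary part. These are the parts of
`∑ i ^ #S • (condition at the chosen components)`, where `S` is the set of arguments at which the
imaginary component is chosen; every summand is an instance of the real condition. The same
applies to the integrability of `E = -i J_ℂ`: substituting `-i J` for `E` in the conditions for a
product structure gives the conditions for the complex structure `J`, up to the factor `-1` for
the binary bracket and `±i` for the ternary one; the factor `±i` exchanges real and imaginary
parts. Likewise `ω_ℂ(Ex, Ey) = (-i)² ω_ℂ(Jx, Jy) = -ω_ℂ(x, y)`.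

Finally, `J_ℂ` commutes with complex conjugation, so `E` anticommutes with it. Conjugation is
therefore a conjugate-linear bijection between the two eigenspaces of `E`, and they have the same
dimension.
-/

/- Common definitions: Lie-Yamaguti algebras, representations, pre-Lie-Yamaguti algebras,
   product/complex/symplectic structures, etc. -/

section LYDefs

variable (k : Type*) [Field k]

/-- A bilinear map, given as a plain function. -/
structure IsBilinMap {M N P : Type*} [AddCommGroup M] [Module k M] [AddCommGroup N] [Module k N]
    [AddCommGroup P] [Module k P] (f : M → N → P) : Prop where
  add₁ : ∀ (x y : M) (z : N), f (x + y) z = f x z + f y z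
  smul₁ : ∀ (c : k) (x : M) (z : N), f (c • x) z = c • f x z
  add₂ : ∀ (x : M) (y z : N), f x (y + z) = f x y + f x z
  smul₂ : ∀ (c : k) (x : M) (y : N), f x (c • y) = c • f x y

/-- A trilinear map, given as a plain function. -/
structure IsTrilinMap {M N P Q : Type*} [AddCommGroup M] [Module k M] [AddCommGroup N] [Module k N]
    [AddCommGroup P] [Module k P] [AddCommGroup Q] [Module k Q] (f : M → N → P → Q) : Prop where
  add₁ : ∀ (x y : M) (z : N) (w : P), f (x + y) z w = f x z w + f y z w
  smul₁ : ∀ (c : k) (x : M) (z : N) (w : P), f (c • x) z w = c • f x z w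
  add₂ : ∀ (x : M) (y z : N) (w : P), f x (y + z) w = f x y w + f x z w
  smul₂ : ∀ (c : k) (x : M) (y : N) (w : P), f x (c • y) w = c • f x y w
  add₃ : ∀ (x : M) (y : N) (z w : P), f x y (z + w) = f x y z + f x y w
  smul₃ : ∀ (c : k) (x : M) (y : N) (z : P), f x y (c • z) = c • f x y z

variable {k}

theorem IsBilinMap.right {M N P : Type*} [AddCommGroup M] [Module k M] [AddCommGroup N]
    [Module k N] [AddCommGroup P] [Module k P] {f : M → N → P} (h : IsBilinMap k f) (x : M) :
    IsLinearMap k (f x) :=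
  ⟨h.add₂ x, fun c y => h.smul₂ c x y⟩

theorem IsTrilinMap.first {M N P Q : Type*} [AddCommGroup M] [Module k M] [AddCommGroup N]
    [Module k N] [AddCommGroup P] [Module k P] [AddCommGroup Q] [Module k Q]
    {f : M → N → P → Q} (h : IsTrilinMap k f) (y : N) (z : P) :
    IsLinearMap k (fun x => f x y z) :=
  ⟨fun a b => h.add₁ a b y z, fun c a => h.smul₁ c a y z⟩

theorem IsTrilinMap.third {M N P Q : Type*} [AddCommGroup M] [Module k M] [AddCommGroup N]
    [Module k N] [AddCommGroup P] [Module k P] [AddCommGroup Q] [Module k Q]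
    {f : M → N → P → Q} (h : IsTrilinMap k f) (x : M) (y : N) :
    IsLinearMap k (f x y) :=
  ⟨h.add₃ x y, fun c z => h.smul₃ c x y z⟩

variable (k)

/-- A Lie-Yamaguti algebra structure, given by a binary bracket `b` and a ternary bracket `t`. -/
structure IsLieYamaguti {g : Type*} [AddCommGroup g] [Module k g]
    (b : g → g → g) (t : g → g → g → g) : Prop where
  bilin : IsBilinMap k b
  trilin : IsTrilinMap k t
  skew_b : ∀ x y, b x y = -b y x
  skew_t : ∀ x y z, t x y z = -t y x z
  ly1 : ∀ x y z, b (b x y) z + b (b y z) x + b (b z x) y + t x y z + t y z x + t z x y = 0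
  ly2 : ∀ x y z w, t (b x y) z w + t (b y z) x w + t (b z x) y w = 0
  ly3 : ∀ x y z w, t x y (b z w) = b (t x y z) w + b z (t x y w)
  ly4 : ∀ x y z w u, t x y (t z w u) = t (t x y z) w u + t z (t x y w) u + t z w (t x y u)

variable {k}

/-- The operator `D(x,y) = μ(y,x) - μ(x,y) + ρ(x)ρ(y) - ρ(y)ρ(x) - ρ([x,y])` of a
representation `(ρ, μ)`. -/
def LYD {g V : Type*} [AddCommGroup V] (b : g → g → g) (ρ : g → V → V) (μ : g → g → V → V)
    (x y : g) (v : V) : V :=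
  μ y x v - μ x y v + ρ x (ρ y v) - ρ y (ρ x v) - ρ (b x y) v

variable (k)

/-- A representation `(ρ, μ)` of a Lie-Yamaguti algebra `(g, b, t)` on `V`. -/
structure IsLYRep {g V : Type*} [AddCommGroup g] [Module k g] [AddCommGroup V] [Module k V]
    (b : g → g → g) (t : g → g → g → g) (ρ : g → V → V) (μ : g → g → V → V) : Prop where
  lin : IsBilinMap k ρ
  bilin : IsTrilinMap k μ
  r1 : ∀ x y z v, μ (b x y) z v - μ x z (ρ y v) + μ y z (ρ x v) = 0
  r2 : ∀ x y z v, μ x (b y z) v - ρ y (μ x z v) + ρ z (μ x y v) = 0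
  r3 : ∀ x y z v, ρ (t x y z) v = LYD b ρ μ x y (ρ z v) - ρ z (LYD b ρ μ x y v)
  r4 : ∀ x y z w v,
    μ z w (μ x y v) - μ y w (μ x z v) - μ x (t y z w) v + LYD b ρ μ y z (μ x w v) = 0
  r5 : ∀ x y z w v, μ (t x y z) w v + μ z (t x y w) v
    = LYD b ρ μ x y (μ z w v) - μ z w (LYD b ρ μ x y v)

variable {k}

/-- The binary bracket of the semidirect product Lie-Yamaguti algebra `g ⋉ V`. -/
def sdB {g V : Type*} [AddCommGroup V] (b : g → g → g) (ρ : g → V → V)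
    (p q : g × V) : g × V :=
  (b p.1 q.1, ρ p.1 q.2 - ρ q.1 p.2)

/-- The ternary bracket of the semidirect product Lie-Yamaguti algebra `g ⋉ V`. -/
def sdT {g V : Type*} [AddCommGroup V] (b : g → g → g) (t : g → g → g → g)
    (ρ : g → V → V) (μ : g → g → V → V) (p q r : g × V) : g × V :=
  (t p.1 q.1 r.1, LYD b ρ μ p.1 q.1 r.2 + μ q.1 r.1 p.2 - μ p.1 r.1 q.2)

/-- The associator of a bilinear product. -/
def preAssoc {A : Type*} [AddCommGroup A] (m : A → A → A) (x y z : A) : A :=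
  m (m x y) z - m x (m y z)

/-- The bracket `{x,y,z}_D = {z,y,x} - {z,x,y} + (y,x,z) - (x,y,z)` of a
pre-Lie-Yamaguti algebra. -/
def preD {A : Type*} [AddCommGroup A] (m : A → A → A) (t : A → A → A → A) (x y z : A) : A :=
  t z y x - t z x y + preAssoc m y x z - preAssoc m x y z

variable (k)

/-- A pre-Lie-Yamaguti algebra structure `(*, {·,·,·})` on `A`. -/
structure IsPreLieYamaguti {A : Type*} [AddCommGroup A] [Module k A]
    (m : A → A → A) (t : A → A → A → A) : Prop where
  bilin : IsBilinMap k m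
  trilin : IsTrilinMap k t
  p1 : ∀ x y z w, t z (m x y - m y x) w - t (m y z) x w + t (m x z) y w = 0
  p2 : ∀ x y z w, t x y (m z w - m w z) = m z (t x y w) - m w (t x y z)
  p3 : ∀ x y z w u, t (t x y z) w u - t (t x y w) z u - t x y (preD m t z w u)
        - t x y (t z w u) + t x y (t w z u) + preD m t z w (t x y u) = 0
  p4 : ∀ x y z w u, t z (preD m t x y w) u + t z (t x y w) u - t z (t y x w) u
        + t z w (preD m t x y u) + t z w (t x y u) - t z w (t y x u)
        = preD m t x y (t z w u) - t (preD m t x y z) w u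
  p5 : ∀ x y z w, m (preD m t x y z) w + m (t x y z) w - m (t y x z) w
        = preD m t x y (m z w) - m z (preD m t x y w)

variable {k}

/-- The binary bracket `[x,y]_C = x*y - y*x` of the sub-adjacent Lie-Yamaguti algebra. -/
def subAdjB {A : Type*} [AddCommGroup A] (m : A → A → A) (x y : A) : A := m x y - m y x

/-- The ternary bracket `⟦x,y,z⟧_C = {x,y,z}_D + {x,y,z} - {y,x,z}` of the sub-adjacent
Lie-Yamaguti algebra. -/
def subAdjT {A : Type*} [AddCommGroup A] (m : A → A → A) (t : A → A → A → A) (x y z : A) : A :=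
  preD m t x y z + t x y z - t y x z

/-- A relative Rota-Baxter operator `T : V → g` on a Lie-Yamaguti algebra with respect to a
representation `(ρ, μ)`. -/
def IsRelRotaBaxter {g V : Type*} [AddCommGroup g] [AddCommGroup V]
    (b : g → g → g) (t : g → g → g → g) (ρ : g → V → V) (μ : g → g → V → V) (T : V → g) : Prop :=
  (∀ u v, b (T u) (T v) = T (ρ (T u) v - ρ (T v) u)) ∧
  (∀ u v w, t (T u) (T v) (T w)
    = T (LYD b ρ μ (T u) (T v) w + μ (T v) (T w) u - μ (T u) (T w) v))

/-- The map `L*` of the dual representation of the representation `(L, R)` of the sub-adjacent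
Lie-Yamaguti algebra of a pre-Lie-Yamaguti algebra:  `⟨L*(x)α, v⟩ = -⟨α, x*v⟩`. -/
def dualRho {g : Type*} [AddCommGroup g] [Module k g] {m : g → g → g}
    (h : IsBilinMap k m) (x : g) (α : Module.Dual k g) : Module.Dual k g :=
  -(α.comp (IsLinearMap.mk' (m x) (h.right x)))

/-- The map `-R*τ` of the dual representation of the representation `(L, R)` of the sub-adjacent
Lie-Yamaguti algebra of a pre-Lie-Yamaguti algebra:  `⟨(-R*τ)(x,y)α, v⟩ = ⟨α, {v,y,x}⟩`. -/
def dualMu {g : Type*} [AddCommGroup g] [Module k g] {t : g → g → g → g}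
    (h : IsTrilinMap k t) (x y : g) (α : Module.Dual k g) : Module.Dual k g :=
  α.comp (IsLinearMap.mk' (fun v => t v y x) (h.first y x))

/-- The isomorphism `B^♯ : g → g*`, `⟨B^♯(x), y⟩ = B(x,y)`, induced by a bilinear form `B`. -/
def bsharp {g : Type*} [AddCommGroup g] [Module k g] {B : g → g → k}
    (hB : IsBilinMap k B) (x : g) : Module.Dual k g :=
  IsLinearMap.mk' (B x) (hB.right x)

variable (k)

/-- A product structure on a Lie-Yamaguti algebra: a linear involution `E ≠ ± id` satisfying
the integrability conditions. -/
structure IsProductStructure {g : Type*} [AddCommGroup g] [Module k g]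
    (b : g → g → g) (t : g → g → g → g) (E : g → g) : Prop where
  lin : IsLinearMap k E
  invol : ∀ x, E (E x) = x
  ne_id : E ≠ id
  ne_neg_id : E ≠ fun x => -x
  integ_b : ∀ x y, b (E x) (E y) = E (b (E x) y) + E (b x (E y)) - b x y
  integ_t : ∀ x y z, t (E x) (E y) (E z) =
      E (t (E x) (E y) z) + E (t x (E y) (E z)) + E (t (E x) y (E z))
      - t (E x) y z - t x (E y) z - t x y (E z) + E (t x y z)

variable {k}

/-- The eigenspace of a linear map `E` for the eigenvalue `c`. -/
def eigenspaceOf {g : Type*} [AddCommGroup g] [Module k g] {E : g → g}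
    (hE : IsLinearMap k E) (c : k) : Submodule k g :=
  LinearMap.ker (IsLinearMap.mk' E hE - c • LinearMap.id)

variable (k)

/-- A paracomplex structure: a product structure whose `±1`-eigenspaces have the same
dimension. -/
structure IsParacomplex {g : Type*} [AddCommGroup g] [Module k g]
    (b : g → g → g) (t : g → g → g → g) (E : g → g) : Prop where
  prod : IsProductStructure k b t E
  dim_eq : Module.finrank k (eigenspaceOf prod.lin 1)
    = Module.finrank k (eigenspaceOf prod.lin (-1))

variable {k}

/-- `E` is perfect: it commutes with both brackets. -/
def IsPerfectMap {g : Type*} (b : g → g → g) (t : g → g → g → g) (E : g → g) : Prop :=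
  (∀ x y, E (b x y) = b (E x) (E y)) ∧ (∀ x y z, E (t x y z) = t (E x) (E y) (E z))

variable (k)

/-- A complex structure on a (real) Lie-Yamaguti algebra. -/
structure IsComplexStructure {g : Type*} [AddCommGroup g] [Module k g]
    (b : g → g → g) (t : g → g → g → g) (J : g → g) : Prop where
  lin : IsLinearMap k J
  invol : ∀ x, J (J x) = -x
  integ_b : ∀ x y, b (J x) (J y) = J (b (J x) y) + J (b x (J y)) + b x y
  integ_t : ∀ x y z, J (t x y z) =
      -t (J x) (J y) (J z) + t (J x) y z + t x (J y) z + t x y (J z)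
      + J (t (J x) (J y) z) + J (t (J x) y (J z)) + J (t x (J y) (J z))

/-- A complex product structure `(J, E)`: a complex structure `J` and a product structure `E`
which anticommute. -/
def IsComplexProductStructure {g : Type*} [AddCommGroup g] [Module k g]
    (b : g → g → g) (t : g → g → g → g) (J E : g → g) : Prop :=
  IsComplexStructure k b t J ∧ IsProductStructure k b t E ∧ ∀ x, E (J x) = -J (E x)

/-- A perfect complex product structure. -/
def IsPerfectComplexProductStructure {g : Type*} [AddCommGroup g] [Module k g]
    (b : g → g → g) (t : g → g → g → g) (J E : g → g) : Prop :=
  IsComplexProductStructure k b t J E ∧ IsPerfectMap b t E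

/-- A symplectic structure on a Lie-Yamaguti algebra. -/
structure IsSymplectic {g : Type*} [AddCommGroup g] [Module k g]
    (b : g → g → g) (t : g → g → g → g) (ω : g → g → k) : Prop where
  bilin : IsBilinMap k ω
  skew : ∀ x y, ω x y = -ω y x
  nondeg : ∀ x, (∀ y, ω x y = 0) → x = 0
  c1 : ∀ x y z, ω x (b y z) + ω y (b z x) + ω z (b x y) = 0
  c2 : ∀ x y z w, ω z (t x y w) - ω x (t w z y) + ω y (t w z x) - ω w (t x y z) = 0

/-- A para-Kähler structure `(ω, E)` on a Lie-Yamaguti algebra. -/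
def IsParaKahler {g : Type*} [AddCommGroup g] [Module k g]
    (b : g → g → g) (t : g → g → g → g) (ω : g → g → k) (E : g → g) : Prop :=
  IsSymplectic k b t ω ∧ IsParacomplex k b t E ∧ ∀ x y, ω (E x) (E y) = -ω x y

/-- A pseudo-Kähler structure `(ω, J)` on a (real) Lie-Yamaguti algebra. -/
def IsPseudoKahler {g : Type*} [AddCommGroup g] [Module k g]
    (b : g → g → g) (t : g → g → g → g) (ω : g → g → k) (J : g → g) : Prop :=
  IsSymplectic k b t ω ∧ IsComplexStructure k b t J ∧ ∀ x y, ω (J x) (J y) = ω x y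

variable {k}

/-- `E` is abelian: the two brackets vanish on each eigenspace of `E` (equational
characterization). -/
def IsAbelianProduct {g : Type*} [AddCommGroup g] (b : g → g → g) (t : g → g → g → g)
    (E : g → g) : Prop :=
  (∀ x y, b (E x) y = -b x (E y)) ∧
  (∀ x y z, t (E x) y z + t x (E y) z + t x y (E z) + t (E x) (E y) (E z) = 0)

end LYDefs

/- The complexification `g_ℂ` of a real vector space `g`, modelled on `g × g`
(the pair `(x, y)` represents `x + iy`). -/

section Complexification

variable {g : Type*} [AddCommGroup g] [Module ℝ g]

noncomputable instance Complexification.instSMul : SMul ℂ (g × g) :=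
  ⟨fun c p => (c.re • p.1 - c.im • p.2, c.im • p.1 + c.re • p.2)⟩

theorem Complexification.smul_def (c : ℂ) (p : g × g) :
    c • p = (c.re • p.1 - c.im • p.2, c.im • p.1 + c.re • p.2) := rfl

noncomputable instance Complexification.instModule : Module ℂ (g × g) where
  one_smul p := by
    rw [Complexification.smul_def]; simp
  mul_smul c d p := by
    simp only [Complexification.smul_def, Complex.mul_re, Complex.mul_im]
    ext <;> simp [smul_sub, smul_add, smul_smul, sub_smul, add_smul] <;> module
  smul_zero c := by
    rw [Complexification.smul_def]; simp [Prod.ext_iff]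
  smul_add c p q := by
    simp only [Complexification.smul_def, Prod.fst_add, Prod.snd_add]
    ext <;> simp [smul_add] <;> abel
  add_smul c d p := by
    simp only [Complexification.smul_def, Complex.add_re, Complex.add_im]
    ext <;> simp [add_smul] <;> abel
  zero_smul p := by
    rw [Complexification.smul_def]; simp [Prod.ext_iff]

end Complexification

set_option linter.unusedSimpArgs false

/-! ### Signs in multilinear maps -/

section MultilinearSigns

variable {k M N P Q : Type*} [Field k] [AddCommGroup M] [Module k M] [AddCommGroup N] [Module k N]
  [AddCommGroup P] [Module k P] [AddCommGroup Q] [Module k Q]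

theorem IsBilinMap.neg_left {f : M → N → P} (h : IsBilinMap k f) (x : M) (z : N) :
    f (-x) z = -f x z := by
  simpa using h.smul₁ (-1) x z

theorem IsBilinMap.neg_right {f : M → N → P} (h : IsBilinMap k f) (x : M) (z : N) :
    f x (-z) = -f x z := by
  simpa using h.smul₂ (-1) x z

theorem IsBilinMap.sub_left {f : M → N → P} (h : IsBilinMap k f) (x y : M) (z : N) :
    f (x - y) z = f x z - f y z := by
  rw [sub_eq_add_neg, h.add₁, h.neg_left, sub_eq_add_neg]

theorem IsBilinMap.sub_right {f : M → N → P} (h : IsBilinMap k f) (x : M) (y z : N) :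
    f x (y - z) = f x y - f x z := by
  rw [sub_eq_add_neg, h.add₂, h.neg_right, sub_eq_add_neg]

theorem IsTrilinMap.neg₁ {f : M → N → P → Q} (h : IsTrilinMap k f) (x : M) (y : N) (z : P) :
    f (-x) y z = -f x y z := by
  simpa using h.smul₁ (-1) x y z

theorem IsTrilinMap.sub₁ {f : M → N → P → Q} (h : IsTrilinMap k f)
    (x : M) (y : N) (z : P) (w : M) :
    f (x - w) y z = f x y z - f w y z := by
  rw [sub_eq_add_neg, h.add₁, h.neg₁, sub_eq_add_neg]

theorem IsTrilinMap.neg₂ {f : M → N → P → Q} (h : IsTrilinMap k f) (x : M) (y : N) (z : P) :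
    f x (-y) z = -f x y z := by
  simpa using h.smul₂ (-1) x y z

theorem IsTrilinMap.sub₂ {f : M → N → P → Q} (h : IsTrilinMap k f)
    (x : M) (y : N) (z : P) (w : N) :
    f x (y - w) z = f x y z - f x w z := by
  rw [sub_eq_add_neg, h.add₂, h.neg₂, sub_eq_add_neg]

theorem IsTrilinMap.neg₃ {f : M → N → P → Q} (h : IsTrilinMap k f) (x : M) (y : N) (z : P) :
    f x y (-z) = -f x y z := by
  simpa using h.smul₃ (-1) x y z

theorem IsTrilinMap.sub₃ {f : M → N → P → Q} (h : IsTrilinMap k f)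
    (x : M) (y : N) (z : P) (w : P) :
    f x y (z - w) = f x y z - f x y w := by
  rw [sub_eq_add_neg, h.add₃, h.neg₃, sub_eq_add_neg]

end MultilinearSigns

/-! ### The Lie-Yamaguti algebra on the complexification -/

theorem complexification_isLieYamaguti {g : Type*} [AddCommGroup g] [Module ℝ g]
    {b : g → g → g} {t : g → g → g → g} (hg : IsLieYamaguti ℝ b t) :
    IsLieYamaguti ℂ
      (fun p q : g × g => (b p.1 q.1 - b p.2 q.2, b p.1 q.2 + b p.2 q.1))
      (fun p q r : g × g =>
        (t p.1 q.1 r.1 - t p.1 q.2 r.2 - t p.2 q.1 r.2 - t p.2 q.2 r.1,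
         t p.1 q.1 r.2 + t p.1 q.2 r.1 + t p.2 q.1 r.1 - t p.2 q.2 r.2)) where
  bilin := by
    constructor <;> intros <;> ext <;> simp only [Complexification.smul_def, Prod.fst_add,
      Prod.snd_add, Prod.fst_sub, Prod.snd_sub, Prod.fst_neg, Prod.snd_neg, Prod.fst_zero,
      Prod.snd_zero, hg.bilin.add₁, hg.bilin.add₂, hg.bilin.sub_left, hg.bilin.sub_right,
      hg.bilin.smul₁, hg.bilin.smul₂] <;> module
  trilin := by
    constructor <;> intros <;> ext <;> simp only [Complexification.smul_def, Prod.fst_add,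
      Prod.snd_add, Prod.fst_sub, Prod.snd_sub, Prod.fst_neg, Prod.snd_neg, Prod.fst_zero,
      Prod.snd_zero, hg.trilin.add₁, hg.trilin.add₂, hg.trilin.add₃, hg.trilin.sub₁,
      hg.trilin.sub₂, hg.trilin.sub₃, hg.trilin.smul₁, hg.trilin.smul₂,
      hg.trilin.smul₃] <;> module
  skew_b := by
    rintro ⟨x₁, x₂⟩ ⟨y₁, y₂⟩
    ext <;> simp only [Prod.fst_add, Prod.snd_add, Prod.fst_sub, Prod.snd_sub, Prod.fst_neg,
      Prod.snd_neg, Prod.fst_zero, Prod.snd_zero, hg.bilin.add₁, hg.bilin.add₂,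
      hg.bilin.sub_left, hg.bilin.sub_right, hg.trilin.add₁, hg.trilin.add₂, hg.trilin.add₃,
      hg.trilin.sub₁, hg.trilin.sub₂, hg.trilin.sub₃]
    · linear_combination (norm := module)
        hg.skew_b x₁ y₁ - hg.skew_b x₂ y₂
    · linear_combination (norm := module)
        hg.skew_b x₁ y₂ + hg.skew_b x₂ y₁
  skew_t := by
    rintro ⟨x₁, x₂⟩ ⟨y₁, y₂⟩ ⟨z₁, z₂⟩
    ext <;> simp only [Prod.fst_add, Prod.snd_add, Prod.fst_sub, Prod.snd_sub, Prod.fst_neg,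
      Prod.snd_neg, Prod.fst_zero, Prod.snd_zero, hg.bilin.add₁, hg.bilin.add₂,
      hg.bilin.sub_left, hg.bilin.sub_right, hg.trilin.add₁, hg.trilin.add₂, hg.trilin.add₃,
      hg.trilin.sub₁, hg.trilin.sub₂, hg.trilin.sub₃]
    · linear_combination (norm := module)
        hg.skew_t x₁ y₁ z₁ - hg.skew_t x₁ y₂ z₂ - hg.skew_t x₂ y₁ z₂
        - hg.skew_t x₂ y₂ z₁
    · linear_combination (norm := module)
        hg.skew_t x₁ y₁ z₂ + hg.skew_t x₁ y₂ z₁ + hg.skew_t x₂ y₁ z₁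
        - hg.skew_t x₂ y₂ z₂
  ly1 := by
    rintro ⟨x₁, x₂⟩ ⟨y₁, y₂⟩ ⟨z₁, z₂⟩
    ext <;> simp only [Prod.fst_add, Prod.snd_add, Prod.fst_sub, Prod.snd_sub, Prod.fst_neg,
      Prod.snd_neg, Prod.fst_zero, Prod.snd_zero, hg.bilin.add₁, hg.bilin.add₂,
      hg.bilin.sub_left, hg.bilin.sub_right, hg.trilin.add₁, hg.trilin.add₂, hg.trilin.add₃,
      hg.trilin.sub₁, hg.trilin.sub₂, hg.trilin.sub₃]
    · linear_combination (norm := module)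
        hg.ly1 x₁ y₁ z₁ - hg.ly1 x₁ y₂ z₂ - hg.ly1 x₂ y₁ z₂ - hg.ly1 x₂ y₂ z₁
    · linear_combination (norm := module)
        hg.ly1 x₁ y₁ z₂ + hg.ly1 x₁ y₂ z₁ + hg.ly1 x₂ y₁ z₁ - hg.ly1 x₂ y₂ z₂
  ly2 := by
    rintro ⟨x₁, x₂⟩ ⟨y₁, y₂⟩ ⟨z₁, z₂⟩ ⟨w₁, w₂⟩
    ext <;> simp only [Prod.fst_add, Prod.snd_add, Prod.fst_sub, Prod.snd_sub, Prod.fst_neg,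
      Prod.snd_neg, Prod.fst_zero, Prod.snd_zero, hg.bilin.add₁, hg.bilin.add₂,
      hg.bilin.sub_left, hg.bilin.sub_right, hg.trilin.add₁, hg.trilin.add₂, hg.trilin.add₃,
      hg.trilin.sub₁, hg.trilin.sub₂, hg.trilin.sub₃]
    · linear_combination (norm := module)
        hg.ly2 x₁ y₁ z₁ w₁ - hg.ly2 x₁ y₁ z₂ w₂ - hg.ly2 x₁ y₂ z₁ w₂
        - hg.ly2 x₁ y₂ z₂ w₁ - hg.ly2 x₂ y₁ z₁ w₂ - hg.ly2 x₂ y₁ z₂ w₁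
        - hg.ly2 x₂ y₂ z₁ w₁ + hg.ly2 x₂ y₂ z₂ w₂
    · linear_combination (norm := module)
        hg.ly2 x₁ y₁ z₁ w₂ + hg.ly2 x₁ y₁ z₂ w₁ + hg.ly2 x₁ y₂ z₁ w₁
        - hg.ly2 x₁ y₂ z₂ w₂ + hg.ly2 x₂ y₁ z₁ w₁ - hg.ly2 x₂ y₁ z₂ w₂
        - hg.ly2 x₂ y₂ z₁ w₂ - hg.ly2 x₂ y₂ z₂ w₁
  ly3 := by
    rintro ⟨x₁, x₂⟩ ⟨y₁, y₂⟩ ⟨z₁, z₂⟩ ⟨w₁, w₂⟩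
    ext <;> simp only [Prod.fst_add, Prod.snd_add, Prod.fst_sub, Prod.snd_sub, Prod.fst_neg,
      Prod.snd_neg, Prod.fst_zero, Prod.snd_zero, hg.bilin.add₁, hg.bilin.add₂,
      hg.bilin.sub_left, hg.bilin.sub_right, hg.trilin.add₁, hg.trilin.add₂, hg.trilin.add₃,
      hg.trilin.sub₁, hg.trilin.sub₂, hg.trilin.sub₃]
    · linear_combination (norm := module)
        hg.ly3 x₁ y₁ z₁ w₁ - hg.ly3 x₁ y₁ z₂ w₂ - hg.ly3 x₁ y₂ z₁ w₂
        - hg.ly3 x₁ y₂ z₂ w₁ - hg.ly3 x₂ y₁ z₁ w₂ - hg.ly3 x₂ y₁ z₂ w₁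
        - hg.ly3 x₂ y₂ z₁ w₁ + hg.ly3 x₂ y₂ z₂ w₂
    · linear_combination (norm := module)
        hg.ly3 x₁ y₁ z₁ w₂ + hg.ly3 x₁ y₁ z₂ w₁ + hg.ly3 x₁ y₂ z₁ w₁
        - hg.ly3 x₁ y₂ z₂ w₂ + hg.ly3 x₂ y₁ z₁ w₁ - hg.ly3 x₂ y₁ z₂ w₂
        - hg.ly3 x₂ y₂ z₁ w₂ - hg.ly3 x₂ y₂ z₂ w₁
  ly4 := by
    rintro ⟨x₁, x₂⟩ ⟨y₁, y₂⟩ ⟨z₁, z₂⟩ ⟨w₁, w₂⟩ ⟨u₁, u₂⟩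
    ext <;> simp only [Prod.fst_add, Prod.snd_add, Prod.fst_sub, Prod.snd_sub, Prod.fst_neg,
      Prod.snd_neg, Prod.fst_zero, Prod.snd_zero, hg.bilin.add₁, hg.bilin.add₂,
      hg.bilin.sub_left, hg.bilin.sub_right, hg.trilin.add₁, hg.trilin.add₂, hg.trilin.add₃,
      hg.trilin.sub₁, hg.trilin.sub₂, hg.trilin.sub₃]
    · linear_combination (norm := module)
        hg.ly4 x₁ y₁ z₁ w₁ u₁ - hg.ly4 x₁ y₁ z₁ w₂ u₂ - hg.ly4 x₁ y₁ z₂ w₁ u₂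
        - hg.ly4 x₁ y₁ z₂ w₂ u₁ - hg.ly4 x₁ y₂ z₁ w₁ u₂ - hg.ly4 x₁ y₂ z₁ w₂ u₁
        - hg.ly4 x₁ y₂ z₂ w₁ u₁ + hg.ly4 x₁ y₂ z₂ w₂ u₂ - hg.ly4 x₂ y₁ z₁ w₁ u₂
        - hg.ly4 x₂ y₁ z₁ w₂ u₁ - hg.ly4 x₂ y₁ z₂ w₁ u₁ + hg.ly4 x₂ y₁ z₂ w₂ u₂
        - hg.ly4 x₂ y₂ z₁ w₁ u₁ + hg.ly4 x₂ y₂ z₁ w₂ u₂ + hg.ly4 x₂ y₂ z₂ w₁ u₂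
        + hg.ly4 x₂ y₂ z₂ w₂ u₁
    · linear_combination (norm := module)
        hg.ly4 x₁ y₁ z₁ w₁ u₂ + hg.ly4 x₁ y₁ z₁ w₂ u₁ + hg.ly4 x₁ y₁ z₂ w₁ u₁
        - hg.ly4 x₁ y₁ z₂ w₂ u₂ + hg.ly4 x₁ y₂ z₁ w₁ u₁ - hg.ly4 x₁ y₂ z₁ w₂ u₂
        - hg.ly4 x₁ y₂ z₂ w₁ u₂ - hg.ly4 x₁ y₂ z₂ w₂ u₁ + hg.ly4 x₂ y₁ z₁ w₁ u₁
        - hg.ly4 x₂ y₁ z₁ w₂ u₂ - hg.ly4 x₂ y₁ z₂ w₁ u₂ - hg.ly4 x₂ y₁ z₂ w₂ u₁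
        - hg.ly4 x₂ y₂ z₁ w₁ u₂ - hg.ly4 x₂ y₂ z₁ w₂ u₁ - hg.ly4 x₂ y₂ z₂ w₁ u₁
        + hg.ly4 x₂ y₂ z₂ w₂ u₂

/-! ### The symplectic form -/

theorem complexification_isSymplectic {g : Type*} [AddCommGroup g] [Module ℝ g]
    {b : g → g → g} {t : g → g → g → g} {ω : g → g → ℝ} (hω : IsSymplectic ℝ b t ω) :
    IsSymplectic ℂ
      (fun p q : g × g => (b p.1 q.1 - b p.2 q.2, b p.1 q.2 + b p.2 q.1))
      (fun p q r : g × g =>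
        (t p.1 q.1 r.1 - t p.1 q.2 r.2 - t p.2 q.1 r.2 - t p.2 q.2 r.1,
         t p.1 q.1 r.2 + t p.1 q.2 r.1 + t p.2 q.1 r.1 - t p.2 q.2 r.2))
      (fun p q : g × g =>
        ((ω p.1 q.1 - ω p.2 q.2 : ℝ) + (ω p.1 q.2 + ω p.2 q.1 : ℝ) * Complex.I)) where
  bilin := by
    constructor <;> intros <;> apply Complex.ext <;> simp only [Complexification.smul_def,
      Prod.fst_add, Prod.snd_add, Complex.ofReal_re, Complex.ofReal_im, Complex.I_re,
      Complex.I_im, Complex.mul_re, Complex.mul_im, Complex.add_re, Complex.add_im, smul_eq_mul,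
      Complex.mul_re, Complex.mul_im, hω.bilin.add₁, hω.bilin.add₂, hω.bilin.sub_left,
      hω.bilin.sub_right, hω.bilin.smul₁, hω.bilin.smul₂] <;> ring
  skew := by
    rintro ⟨x₁, x₂⟩ ⟨y₁, y₂⟩
    apply Complex.ext <;> simp only [Complex.ofReal_re, Complex.ofReal_im, Complex.I_re,
      Complex.I_im, Complex.mul_re, Complex.mul_im, Complex.add_re, Complex.add_im,
      Complex.sub_re, Complex.sub_im, Complex.neg_re, Complex.neg_im, Complex.zero_re,
      Complex.zero_im, hω.bilin.add₁, hω.bilin.add₂, hω.bilin.sub_left, hω.bilin.sub_right,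
      hω.bilin.neg_left, hω.bilin.neg_right]
    · linear_combination
        hω.skew x₁ y₁ - hω.skew x₂ y₂
    · linear_combination
        hω.skew x₁ y₂ + hω.skew x₂ y₁
  nondeg := by
    rintro ⟨x₁, x₂⟩ h
    -- Testing against the real vectors `(y, 0)` already separates both components.
    ext
    · refine hω.nondeg _ fun y => ?_
      simpa [(hω.bilin.right _).map_zero] using congrArg Complex.re (h (y, 0))
    · refine hω.nondeg _ fun y => ?_
      simpa [(hω.bilin.right _).map_zero] using congrArg Complex.im (h (y, 0))
  c1 := by
    rintro ⟨x₁, x₂⟩ ⟨y₁, y₂⟩ ⟨z₁, z₂⟩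
    apply Complex.ext <;> simp only [Complex.ofReal_re, Complex.ofReal_im, Complex.I_re,
      Complex.I_im, Complex.mul_re, Complex.mul_im, Complex.add_re, Complex.add_im,
      Complex.sub_re, Complex.sub_im, Complex.neg_re, Complex.neg_im, Complex.zero_re,
      Complex.zero_im, hω.bilin.add₁, hω.bilin.add₂, hω.bilin.sub_left, hω.bilin.sub_right,
      hω.bilin.neg_left, hω.bilin.neg_right]
    · linear_combination
        hω.c1 x₁ y₁ z₁ - hω.c1 x₁ y₂ z₂ - hω.c1 x₂ y₁ z₂ - hω.c1 x₂ y₂ z₁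
    · linear_combination
        hω.c1 x₁ y₁ z₂ + hω.c1 x₁ y₂ z₁ + hω.c1 x₂ y₁ z₁ - hω.c1 x₂ y₂ z₂
  c2 := by
    rintro ⟨x₁, x₂⟩ ⟨y₁, y₂⟩ ⟨z₁, z₂⟩ ⟨w₁, w₂⟩
    apply Complex.ext <;> simp only [Complex.ofReal_re, Complex.ofReal_im, Complex.I_re,
      Complex.I_im, Complex.mul_re, Complex.mul_im, Complex.add_re, Complex.add_im,
      Complex.sub_re, Complex.sub_im, Complex.neg_re, Complex.neg_im, Complex.zero_re,
      Complex.zero_im, hω.bilin.add₁, hω.bilin.add₂, hω.bilin.sub_left, hω.bilin.sub_right,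
      hω.bilin.neg_left, hω.bilin.neg_right]
    · linear_combination
        hω.c2 x₁ y₁ z₁ w₁ - hω.c2 x₁ y₁ z₂ w₂ - hω.c2 x₁ y₂ z₁ w₂ - hω.c2 x₁ y₂ z₂ w₁
        - hω.c2 x₂ y₁ z₁ w₂ - hω.c2 x₂ y₁ z₂ w₁ - hω.c2 x₂ y₂ z₁ w₁ + hω.c2 x₂ y₂ z₂ w₂
    · linear_combination
        hω.c2 x₁ y₁ z₁ w₂ + hω.c2 x₁ y₁ z₂ w₁ + hω.c2 x₁ y₂ z₁ w₁ - hω.c2 x₁ y₂ z₂ w₂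
        + hω.c2 x₂ y₁ z₁ w₁ - hω.c2 x₂ y₁ z₂ w₂ - hω.c2 x₂ y₂ z₁ w₂ - hω.c2 x₂ y₂ z₂ w₁

/-! ### The paracomplex structure -/

/-- Multiplication by `-i` on pairs; thus `E (u, v) = (J v, -J u)`. -/
theorem neg_I_smul {g : Type*} [AddCommGroup g] [Module ℝ g] (u v : g) :
    (-Complex.I) • ((u, v) : g × g) = (v, -u) := by
  simp [Complexification.smul_def]

theorem complexification_isProductStructure {g : Type*} [AddCommGroup g] [Module ℝ g]
    [Nontrivial g] {b : g → g → g} {t : g → g → g → g} {J : g → g}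
    (hg : IsLieYamaguti ℝ b t) (hJ : IsComplexStructure ℝ b t J) :
    IsProductStructure ℂ
      (fun p q : g × g => (b p.1 q.1 - b p.2 q.2, b p.1 q.2 + b p.2 q.1))
      (fun p q r : g × g =>
        (t p.1 q.1 r.1 - t p.1 q.2 r.2 - t p.2 q.1 r.2 - t p.2 q.2 r.1,
         t p.1 q.1 r.2 + t p.1 q.2 r.1 + t p.2 q.1 r.1 - t p.2 q.2 r.2))
      (fun p : g × g => (-Complex.I) • ((J p.1, J p.2) : g × g)) where
  lin := {
    map_add := by
      intros
      ext <;> simp only [neg_I_smul, Prod.fst_add, Prod.snd_add, hJ.lin.map_add]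
      abel
    map_smul := by
      intros
      ext <;> simp only [neg_I_smul, Complexification.smul_def, hJ.lin.map_add, hJ.lin.map_sub,
        hJ.lin.map_smul] <;> module }
  invol := by
    rintro ⟨x₁, x₂⟩
    simp only [neg_I_smul, hJ.lin.map_neg, hJ.invol, neg_neg]
  ne_id := by
    obtain ⟨x, hx⟩ := exists_ne (0 : g)
    intro h
    have := congrArg Prod.fst (congrFun h (x, 0))
    simp only [neg_I_smul, hJ.lin.map_zero, id] at this
    exact hx this.symm
  ne_neg_id := by
    obtain ⟨x, hx⟩ := exists_ne (0 : g)
    intro h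
    have := congrArg Prod.fst (congrFun h (x, 0))
    simp only [neg_I_smul, hJ.lin.map_zero, Prod.fst_neg] at this
    exact hx (neg_eq_zero.1 this.symm)
  integ_b := by
    rintro ⟨x₁, x₂⟩ ⟨y₁, y₂⟩
    ext <;> simp only [Prod.fst_add, Prod.snd_add, Prod.fst_sub, Prod.snd_sub, Prod.fst_neg,
      Prod.snd_neg, Prod.fst_zero, Prod.snd_zero, neg_I_smul, hg.bilin.add₁, hg.bilin.add₂,
      hg.bilin.sub_left, hg.bilin.sub_right, hg.trilin.add₁, hg.trilin.add₂, hg.trilin.add₃,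
      hg.trilin.sub₁, hg.trilin.sub₂, hg.trilin.sub₃, hg.bilin.neg_left, hg.bilin.neg_right,
      hg.trilin.neg₁, hg.trilin.neg₂, hg.trilin.neg₃, hJ.lin.map_add, hJ.lin.map_sub,
      hJ.lin.map_neg]
    · linear_combination (norm := module)
        -(hJ.integ_b x₁ y₁ - hJ.integ_b x₂ y₂)
    · linear_combination (norm := module)
        -(hJ.integ_b x₁ y₂ + hJ.integ_b x₂ y₁)
  integ_t := by
    rintro ⟨x₁, x₂⟩ ⟨y₁, y₂⟩ ⟨z₁, z₂⟩
    ext <;> simp only [Prod.fst_add, Prod.snd_add, Prod.fst_sub, Prod.snd_sub, Prod.fst_neg,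
      Prod.snd_neg, Prod.fst_zero, Prod.snd_zero, neg_I_smul, hg.bilin.add₁, hg.bilin.add₂,
      hg.bilin.sub_left, hg.bilin.sub_right, hg.trilin.add₁, hg.trilin.add₂, hg.trilin.add₃,
      hg.trilin.sub₁, hg.trilin.sub₂, hg.trilin.sub₃, hg.bilin.neg_left, hg.bilin.neg_right,
      hg.trilin.neg₁, hg.trilin.neg₂, hg.trilin.neg₃, hJ.lin.map_add, hJ.lin.map_sub,
      hJ.lin.map_neg]
    · linear_combination (norm := module)
        -(hJ.integ_t x₁ y₁ z₂ + hJ.integ_t x₁ y₂ z₁ + hJ.integ_t x₂ y₁ z₁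
        - hJ.integ_t x₂ y₂ z₂)
    · linear_combination (norm := module)
        hJ.integ_t x₁ y₁ z₁ - hJ.integ_t x₁ y₂ z₂ - hJ.integ_t x₂ y₁ z₂
        - hJ.integ_t x₂ y₂ z₁

theorem mem_eigenspaceOf {k V : Type*} [Field k] [AddCommGroup V] [Module k V] {E : V → V}
    (hE : IsLinearMap k E) (c : k) (x : V) : x ∈ eigenspaceOf hE c ↔ E x = c • x := by
  simp [eigenspaceOf, sub_eq_zero]

/-- Conjugation `(u, v) ↦ (u, -v)` anticommutes with `E = -i J_ℂ`, so it restricts to a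
conjugate-linear bijection between the `±1`-eigenspaces. -/
theorem complexification_isParacomplex {g : Type*} [AddCommGroup g] [Module ℝ g]
    [Nontrivial g] {b : g → g → g} {t : g → g → g → g} {J : g → g}
    (hg : IsLieYamaguti ℝ b t) (hJ : IsComplexStructure ℝ b t J) :
    IsParacomplex ℂ
      (fun p q : g × g => (b p.1 q.1 - b p.2 q.2, b p.1 q.2 + b p.2 q.1))
      (fun p q r : g × g =>
        (t p.1 q.1 r.1 - t p.1 q.2 r.2 - t p.2 q.1 r.2 - t p.2 q.2 r.1,
         t p.1 q.1 r.2 + t p.1 q.2 r.1 + t p.2 q.1 r.1 - t p.2 q.2 r.2))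
      (fun p : g × g => (-Complex.I) • ((J p.1, J p.2) : g × g)) where
  prod := complexification_isProductStructure hg hJ
  dim_eq := by
    have h₁ : ∀ p : g × g, p ∈ eigenspaceOf (complexification_isProductStructure hg hJ).lin 1 ↔
        J p.2 = p.1 ∧ -J p.1 = p.2 := by
      intro p
      rw [mem_eigenspaceOf, one_smul, neg_I_smul, Prod.ext_iff]
    have h₂ : ∀ p : g × g, p ∈ eigenspaceOf (complexification_isProductStructure hg hJ).lin (-1) ↔
        J p.2 = -p.1 ∧ -J p.1 = -p.2 := by
      intro p
      rw [mem_eigenspaceOf, neg_I_smul, neg_smul, one_smul, Prod.ext_iff]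
      rfl
    let e : eigenspaceOf (complexification_isProductStructure hg hJ).lin (1 : ℂ) ≃+
        eigenspaceOf (complexification_isProductStructure hg hJ).lin (-1 : ℂ) :=
      { toFun := fun p => ⟨(p.1.1, -p.1.2), by
          have := (h₁ _).1 p.2
          rw [h₂]
          exact ⟨by rw [hJ.lin.map_neg, this.1], by rw [this.2, neg_neg]⟩⟩
        invFun := fun p => ⟨(p.1.1, -p.1.2), by
          have := (h₂ _).1 p.2
          rw [h₁]
          exact ⟨by rw [hJ.lin.map_neg, this.1, neg_neg], this.2⟩⟩
        left_inv := fun p => Subtype.ext (Prod.ext rfl (neg_neg p.1.2))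
        right_inv := fun p => Subtype.ext (Prod.ext rfl (neg_neg p.1.2))
        map_add' := fun p q => Subtype.ext (Prod.ext rfl (neg_add p.1.2 q.1.2)) }
    -- A bijection semilinear over an automorphism of the scalars preserves the rank.
    have hrank := rank_eq_of_equiv_equiv (starRingEnd ℂ) e
      Complex.conjAe.bijective (by
      intro c p
      -- Conjugation is conjugate-linear: `conj (c • p) = conj c • conj p`.
      apply Subtype.ext
      change ((c • p.1).1, -(c • p.1).2) = (starRingEnd ℂ c) • (p.1.1, -p.1.2)
      simp only [Complexification.smul_def, Complex.conj_re, Complex.conj_im]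
      ext <;> module)
    exact congrArg Cardinal.toNat hrank

/-! ### The para-Kähler structure -/

/-- A finite-dimensional real pseudo-Kähler Lie-Yamaguti algebra `(g, ω, J)`
yields a complex para-Kähler Lie-Yamaguti algebra `(g_ℂ, ω_ℂ, -i J_ℂ)` on the
complexification `g_ℂ = g ⊗_ℝ ℂ` (modelled as `g × g`). -/
theorem statement18 {g : Type*} [AddCommGroup g] [Module ℝ g] [FiniteDimensional ℝ g]
    [Nontrivial g]
    (b : g → g → g) (t : g → g → g → g) (hg : IsLieYamaguti ℝ b t)
    (ω : g → g → ℝ) (J : g → g) (hpk : IsPseudoKahler ℝ b t ω J) :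
    IsLieYamaguti ℂ
      (fun p q : g × g => (b p.1 q.1 - b p.2 q.2, b p.1 q.2 + b p.2 q.1))
      (fun p q r : g × g =>
        (t p.1 q.1 r.1 - t p.1 q.2 r.2 - t p.2 q.1 r.2 - t p.2 q.2 r.1,
         t p.1 q.1 r.2 + t p.1 q.2 r.1 + t p.2 q.1 r.1 - t p.2 q.2 r.2)) ∧
    IsParaKahler ℂ
      (fun p q : g × g => (b p.1 q.1 - b p.2 q.2, b p.1 q.2 + b p.2 q.1))
      (fun p q r : g × g =>
        (t p.1 q.1 r.1 - t p.1 q.2 r.2 - t p.2 q.1 r.2 - t p.2 q.2 r.1,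
         t p.1 q.1 r.2 + t p.1 q.2 r.1 + t p.2 q.1 r.1 - t p.2 q.2 r.2))
      (fun p q : g × g =>
        ((ω p.1 q.1 - ω p.2 q.2 : ℝ) + (ω p.1 q.2 + ω p.2 q.1 : ℝ) * Complex.I))
      (fun p : g × g => (-Complex.I) • ((J p.1, J p.2) : g × g)) := by
  obtain ⟨hω, hJ, hωJ⟩ := hpk
  refine ⟨complexification_isLieYamaguti hg, complexification_isSymplectic hω,
    complexification_isParacomplex hg hJ, ?_⟩
  rintro ⟨x₁, x₂⟩ ⟨y₁, y₂⟩
  simp only [neg_I_smul, hω.bilin.neg_left, hω.bilin.neg_right, hωJ]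
  push_cast
  ring
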